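/- Let I ⊆ ℝ be an open interval, n ≥ 1, and let g : ℝⁿ × I → ℝⁿ be continuously differentiable such that: (a) for every (x, τ) ∈ ℝⁿ × I the partial derivative Dₓg(x, τ) is positive definite, i.e. ⟨Dₓg(x, τ)u, u⟩ > 0 for all u ≠ 0; (b) for every compact subinterval J ⊆ I the set {x ∈ ℝⁿ : g(x, τ) = 0 for some τ ∈ J} is bounded; and (c) g(x₀, τ₀) = 0 for some (x₀, τ₀) ∈ ℝⁿ × I. Then for every τ ∈ I there exists a unique δ(τ) ∈ ℝⁿ with g(δ(τ), τ) = 0, and the map τ ↦ δ(τ) is continuously differentiable on I. -/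

import Mathlib

open scoped RealInnerProductSpace
open Set

/-!
On the segment from `x` to `y` the derivative of `⟪g (·, τ), y - x⟫` along `y - x` is positive, so
`g (·, τ)` is injective and each parameter admits at most one zero. Over a connected open parameter
set, the parameters admitting a zero form an open set, by the implicit function theorem, and a
relatively closed one, because zeros over nearby parameters stay in a compact set and so accumulate
at a zero. Hence there is a zero for every parameter, and by uniqueness it agrees locally with the
smooth implicit function.
-/

open Filter Topology
open scoped ContDiff

section Topological

variable {X T Y : Type*} [TopologicalSpace X] [TopologicalSpace T] [TopologicalSpace Y] [T1Space Y]
  {F : X × T → Y} {y : Y}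

theorem exists_apply_eq_of_frequently {K : Set X} {τ : T} (hK : IsCompact K)
    (hF : ∀ x ∈ K, ContinuousAt F (x, τ)) (hmem : ∀ᶠ σ in 𝓝 τ, ∀ x, F (x, σ) = y → x ∈ K)
    (hfreq : ∃ᶠ σ in 𝓝 τ, ∃ x, F (x, σ) = y) : ∃ x, F (x, τ) = y := by
  by_contra! hne
  have hswap (x : X) (hx : x ∈ K) : ContinuousAt (fun z : T × X => F z.swap) (τ, x) :=
    ContinuousAt.comp (x := (τ, x)) (hF x hx) continuous_swap.continuousAt
  have hK_ne : ∀ᶠ σ in 𝓝 τ, ∀ x ∈ K, F (x, σ) ≠ y :=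
    hK.eventually_forall_of_forall_eventually fun x hx => (hswap x hx).eventually_ne (hne x)
  refine hfreq ?_
  filter_upwards [hmem, hK_ne] with σ hσ hσK
  rintro ⟨x, hx⟩
  exact hσK x (hσ x hx) hx

theorem forall_exists_apply_eq_of_isPreconnected {U : Set T} (hU : IsOpen U)
    (hUc : IsPreconnected U) (hF : ∀ x, ∀ τ ∈ U, ContinuousAt F (x, τ))
    (hcompact : ∀ τ ∈ U, ∃ K, IsCompact K ∧ ∀ᶠ σ in 𝓝 τ, ∀ x, F (x, σ) = y → x ∈ K)
    (hlocal : ∀ x, ∀ τ ∈ U, F (x, τ) = y → ∀ᶠ σ in 𝓝 τ, ∃ x', F (x', σ) = y)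
    (hexists : ∃ τ ∈ U, ∃ x, F (x, τ) = y) : ∀ τ ∈ U, ∃ x, F (x, τ) = y := by
  set S : Set T := {τ ∈ U | ∃ x, F (x, τ) = y}
  have hS_open : IsOpen S := by
    refine isOpen_iff_mem_nhds.2 ?_
    rintro τ ⟨hτ, x, hx⟩
    exact inter_mem (hU.mem_nhds hτ) (hlocal x τ hτ hx)
  have hS_closed : closure S ∩ U ⊆ S := by
    rintro τ ⟨hcl, hτ⟩
    obtain ⟨K, hK, hmem⟩ := hcompact τ hτ
    exact ⟨hτ, exists_apply_eq_of_frequently hK (fun x _ => hF x τ hτ) hmem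
      ((mem_closure_iff_frequently.1 hcl).mono fun _ hσ => hσ.2)⟩
  obtain ⟨τ₀, hτ₀, hx₀⟩ := hexists
  have hUS : U ⊆ S :=
    hUc.subset_of_closure_inter_subset hS_open ⟨τ₀, hτ₀, hτ₀, hx₀⟩ hS_closed
  exact fun τ hτ => (hUS hτ).2

end Topological

section PositiveDefinite

variable {E : Type*} [NormedAddCommGroup E] [InnerProductSpace ℝ E]

/-- Positive definiteness of a real operator in the sense of its quadratic form. Unlike for
`ContinuousLinearMap.IsPositive`, the operator need not be symmetric. -/
def IsPositiveDefinite (A : E →L[ℝ] E) : Prop :=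
  ∀ u : E, u ≠ 0 → 0 < ⟪A u, u⟫

theorem IsPositiveDefinite.injective {A : E →L[ℝ] E} (hA : IsPositiveDefinite A) :
    Function.Injective A := by
  refine (injective_iff_map_eq_zero A).2 fun u hu => ?_
  by_contra hne
  simpa only [hu, inner_zero_left, lt_irrefl] using hA u hne

theorem IsPositiveDefinite.isInvertible [FiniteDimensional ℝ E] {A : E →L[ℝ] E}
    (hA : IsPositiveDefinite A) : A.IsInvertible :=
  ⟨(LinearEquiv.ofInjectiveEndo (A : E →ₗ[ℝ] E) hA.injective).toContinuousLinearEquiv, rfl⟩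

theorem injOn_of_isPositiveDefinite_hasFDerivWithinAt {s : Set E} (hs : Convex ℝ s) {f : E → E}
    {f' : E → E →L[ℝ] E} (hf : ∀ x ∈ s, HasFDerivWithinAt f (f' x) s x)
    (hf' : ∀ x ∈ s, IsPositiveDefinite (f' x)) : InjOn f s := by
  intro x hx y hy hxy
  by_contra hne
  have hderiv (z : E) (hz : z ∈ s) :
      HasFDerivWithinAt (fun z => ⟪y - x, f z⟫) (innerSL ℝ (y - x) ∘L f' z) s z :=
    (innerSL ℝ (y - x)).hasFDerivAt.comp_hasFDerivWithinAt z (hf z hz)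
  obtain ⟨z, hz, hmean⟩ := domain_mvt hderiv hs hx hy
  have hpos : 0 < ⟪f' z (y - x), y - x⟫ :=
    hf' z (hs.segment_subset hx hy hz) _ (sub_ne_zero.2 (Ne.symm hne))
  have hzero : ⟪f' z (y - x), y - x⟫ = 0 := by
    rw [hxy, sub_self] at hmean
    exact (real_inner_comm _ _).trans hmean.symm
  exact hpos.ne' hzero

end PositiveDefinite

section ImplicitFunction

variable {𝕜 E P G : Type*} [RCLike 𝕜]
  [NormedAddCommGroup E] [NormedSpace 𝕜 E] [CompleteSpace E]
  [NormedAddCommGroup P] [NormedSpace 𝕜 P] [CompleteSpace P]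
  [NormedAddCommGroup G] [NormedSpace 𝕜 G] [CompleteSpace G]
  {k : ℕ∞ω} {g : E × P → G}

theorem exists_contDiffAt_eventually_apply_eq {x : E} {τ : P} (hk : k ≠ 0)
    (hg : ContDiffAt 𝕜 k g (x, τ))
    (hinv : (fderiv 𝕜 (fun x' => g (x', τ)) x).IsInvertible) :
    ∃ ψ : P → E, ContDiffAt 𝕜 k ψ τ ∧ ∀ᶠ σ in 𝓝 τ, g (ψ σ, σ) = g (x, τ) := by
  have hswap : ContDiffAt 𝕜 k (fun p : P × E => g p.swap) (τ, x) :=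
    ContDiffAt.comp (τ, x) (g := g) hg (contDiffAt_snd.prodMk contDiffAt_fst)
  have hslice : fderiv 𝕜 (fun x' => g (x', τ)) x =
      fderiv 𝕜 (fun p : P × E => g p.swap) (τ, x) ∘L .inr 𝕜 P E :=
    ((hswap.differentiableAt hk).hasFDerivAt.comp x (hasFDerivAt_prodMk_right τ x)).fderiv
  rw [hslice] at hinv
  exact ⟨hswap.implicitFunction hk hinv, hswap.contDiffAt_implicitFunction hk hinv,
    hswap.eventually_apply_implicitFunction hk hinv⟩

theorem contDiffOn_of_apply_eq_iff {U : Set P} {δ : P → E} {y : G} (hk : k ≠ 0) (hU : IsOpen U)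
    (hg : ∀ τ ∈ U, ContDiffAt 𝕜 k g (δ τ, τ))
    (hinv : ∀ τ ∈ U, (fderiv 𝕜 (fun x => g (x, τ)) (δ τ)).IsInvertible)
    (hδ : ∀ τ ∈ U, ∀ x, g (x, τ) = y ↔ x = δ τ) : ContDiffOn 𝕜 k δ U := by
  intro τ hτ
  obtain ⟨ψ, hψ, hgψ⟩ := exists_contDiffAt_eventually_apply_eq hk (hg τ hτ) (hinv τ hτ)
  have hδψ : δ =ᶠ[𝓝 τ] ψ := by
    filter_upwards [hgψ, hU.mem_nhds hτ] with σ hσ hσU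
    exact ((hδ σ hσU _).1 (hσ.trans ((hδ τ hτ _).2 rfl))).symm
  exact (hψ.congr_of_eventuallyEq hδψ).contDiffWithinAt

end ImplicitFunction

theorem stmt_9_general {E P : Type*} [NormedAddCommGroup E] [InnerProductSpace ℝ E]
    [FiniteDimensional ℝ E] [NormedAddCommGroup P] [NormedSpace ℝ P] [CompleteSpace P]
    {k : ℕ∞ω} (hk : k ≠ 0) {U : Set P} (hU : IsOpen U) (hUc : IsPreconnected U)
    {g : E × P → E} (hg : ContDiffOn ℝ k g (univ ×ˢ U))
    (hpos : ∀ x, ∀ τ ∈ U, IsPositiveDefinite (fderiv ℝ (fun x' => g (x', τ)) x))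
    (hbdd : ∀ τ ∈ U, ∃ V ∈ 𝓝 τ, Bornology.IsBounded {x | ∃ σ ∈ V, g (x, σ) = 0})
    (hzero : ∃ x₀, ∃ τ₀ ∈ U, g (x₀, τ₀) = 0) :
    ∃ δ : P → E, ContDiffOn ℝ k δ U ∧
      ∀ τ ∈ U, g (δ τ, τ) = 0 ∧ ∀ x, g (x, τ) = 0 → x = δ τ := by
  have hgat (x : E) (τ : P) (hτ : τ ∈ U) : ContDiffAt ℝ k g (x, τ) :=
    hg.contDiffAt ((isOpen_univ.prod hU).mem_nhds ⟨mem_univ x, hτ⟩)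
  have hslice (x : E) (τ : P) (hτ : τ ∈ U) : DifferentiableAt ℝ (fun x' => g (x', τ)) x :=
    ((hgat x τ hτ).differentiableAt hk).fun_comp' x (by fun_prop)
  have hinj (τ : P) (hτ : τ ∈ U) : Function.Injective fun x => g (x, τ) :=
    injOn_univ.1 <| injOn_of_isPositiveDefinite_hasFDerivWithinAt convex_univ
      (fun x _ => (hslice x τ hτ).hasFDerivAt.hasFDerivWithinAt) fun x _ => hpos x τ hτ
  have hcompact (τ : P) (hτ : τ ∈ U) :
      ∃ K, IsCompact K ∧ ∀ᶠ σ in 𝓝 τ, ∀ x, g (x, σ) = 0 → x ∈ K := by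
    obtain ⟨V, hV, hVb⟩ := hbdd τ hτ
    exact ⟨_, hVb.isCompact_closure,
      mem_of_superset hV fun σ hσ x hx => subset_closure ⟨σ, hσ, hx⟩⟩
  have hlocal (x : E) (τ : P) (hτ : τ ∈ U) (hx : g (x, τ) = 0) :
      ∀ᶠ σ in 𝓝 τ, ∃ x', g (x', σ) = 0 := by
    obtain ⟨ψ, -, hψ⟩ :=
      exists_contDiffAt_eventually_apply_eq hk (hgat x τ hτ) (hpos x τ hτ).isInvertible
    exact hψ.mono fun σ hσ => ⟨ψ σ, hσ.trans hx⟩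
  obtain ⟨x₀, τ₀, hτ₀, hx₀⟩ := hzero
  choose! δ hδ using forall_exists_apply_eq_of_isPreconnected hU hUc
    (fun x τ hτ => (hgat x τ hτ).continuousAt) hcompact hlocal ⟨τ₀, hτ₀, x₀, hx₀⟩
  have hδ_iff (τ : P) (hτ : τ ∈ U) (x : E) : g (x, τ) = 0 ↔ x = δ τ :=
    ⟨fun hx => hinj τ hτ (hx.trans (hδ τ hτ).symm), fun hx => hx ▸ hδ τ hτ⟩
  exact ⟨δ, contDiffOn_of_apply_eq_iff hk hU (fun τ => hgat (δ τ) τ)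
    (fun τ hτ => (hpos (δ τ) τ hτ).isInvertible) hδ_iff,
    fun τ hτ => ⟨hδ τ hτ, fun x => (hδ_iff τ hτ x).1⟩⟩

/-- Global continuation of zeros: if `g : ℝⁿ × I → ℝⁿ` is `C¹` on `ℝⁿ × I` for an
open interval `I ⊆ ℝ`, its partial derivative in `x` is everywhere positive
definite, the zero set over every compact subinterval of `I` is bounded, and `g`
has a zero at some `(x₀, τ₀)`, then for every `τ ∈ I` there is a unique zero
`δ τ` of `g (·, τ)`, and `τ ↦ δ τ` is continuously differentiable on `I`. -/
theorem stmt_9 (n : ℕ) (hn : 1 ≤ n)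
    (I : Set ℝ) (hIopen : IsOpen I) (hIconn : I.OrdConnected)
    (g : EuclideanSpace ℝ (Fin n) × ℝ → EuclideanSpace ℝ (Fin n))
    (hg : ContDiffOn ℝ 1 g (univ ×ˢ I))
    (hpos : ∀ (x : EuclideanSpace ℝ (Fin n)), ∀ τ ∈ I,
      ∀ u : EuclideanSpace ℝ (Fin n), u ≠ 0 →
        0 < ⟪fderiv ℝ (fun x' => g (x', τ)) x u, u⟫)
    (hbdd : ∀ a b : ℝ, Icc a b ⊆ I →
      Bornology.IsBounded
        {x : EuclideanSpace ℝ (Fin n) | ∃ τ ∈ Icc a b, g (x, τ) = 0})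
    (hzero : ∃ x₀ : EuclideanSpace ℝ (Fin n), ∃ τ₀ ∈ I, g (x₀, τ₀) = 0) :
    ∃ δ : ℝ → EuclideanSpace ℝ (Fin n),
      ContDiffOn ℝ 1 δ I ∧
      ∀ τ ∈ I, g (δ τ, τ) = 0 ∧
        ∀ x : EuclideanSpace ℝ (Fin n), g (x, τ) = 0 → x = δ τ := by
  refine stmt_9_general one_ne_zero hIopen hIconn.isPreconnected hg hpos (fun τ hτ => ?_) hzero
  obtain ⟨a, b, -, hnhds, hsub⟩ := exists_Icc_mem_subset_of_mem_nhds (hIopen.mem_nhds hτ)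
  exact ⟨Icc a b, hnhds, hbdd a b hsub⟩
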